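/- Let X₁ and X₂ be finite sets, let k ∈ ℕ, and for i ∈ {1,2} let X_i be partitioned into k pairwise disjoint (possibly empty) blocks B^i_1,…,B^i_k whose union is X_i. For a function γ defined on the set of pairs (j, α) with 1 ≤ j ≤ k and α : B^i_j → Bool, taking values in Bool, say that γ is block-unique if for every j there is at most one local assignment α : B^i_j → Bool with γ(j, α) = true, let the weight of γ be the number of pairs mapped to true, and define dec(γ) : X_i → Bool by dec(γ)(x) = true iff γ(j, α) = true for some local assignment α of the block B^i_j containing x with α(x) = true. Let f be an arbitrary predicate on pairs of truth assignments (X₁ → Bool) × (X₂ → Bool). Then the following are equivalent: (1) there exists β₁ : X₁ → Bool such that for every β₂ : X₂ → Bool, f(β₁, β₂) holds; (2) there exists a block-unique γ₁ of weight k (over the blocks of X₁) such that for every block-unique γ₂ of weight k (over the blocks of X₂), f(dec(γ₁), dec(γ₂)) holds. -/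

import Mathlib

/-- `γ` (a Boolean selection of pairs `(j, local assignment of block j)`) is
block-unique: for every block `j`, at most one local assignment is selected. -/
def blockUnique {X : Type} {k : ℕ} (blk : X → Fin k)
    (γ : (j : Fin k) → ({x : X // blk x = j} → Bool) → Bool) : Prop :=
  ∀ (j : Fin k) (α α' : {x : X // blk x = j} → Bool),
    γ j α = true → γ j α' = true → α = α'

/-- The weight of `γ`: the number of pairs `(j, local assignment)` mapped to true. -/
def gweight {X : Type} {k : ℕ} [Fintype X] [DecidableEq X] (blk : X → Fin k)
    (γ : (j : Fin k) → ({x : X // blk x = j} → Bool) → Bool) : ℕ :=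
  (Finset.univ.filter
    (fun p : Σ j : Fin k, ({x : X // blk x = j} → Bool) => γ p.1 p.2 = true)).card

/-- Decoding `γ` to a truth assignment on `X`: `x` is true iff some selected local
assignment of the block of `x` makes `x` true. -/
def decodeBlocks {X : Type} {k : ℕ} [Fintype X] [DecidableEq X] (blk : X → Fin k)
    (γ : (j : Fin k) → ({x : X // blk x = j} → Bool) → Bool) : X → Bool :=
  fun x => decide (∃ α : {x' : X // blk x' = blk x} → Bool,
    γ (blk x) α = true ∧ α ⟨x, rfl⟩ = true)

/-!
Restricting an assignment `β` to the blocks and selecting these restrictions gives a block-unique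
selection with one pair per block, empty blocks included, and decoding it returns `β`. So decoding
is onto already from the block-unique selections of weight `k`, and a quantifier over assignments
may be traded for one over such selections.
-/

section Encoding

variable {X ι : Type*} [Fintype X] [DecidableEq ι]

/-- The encoding of a truth assignment `β` as a selection of local assignments: in each block,
including an empty one, the restriction of `β` is selected and nothing else is. -/
def encodeBlocks (blk : X → ι) (β : X → Bool) (j : ι) (α : {x : X // blk x = j} → Bool) : Bool :=
  decide (α = fun x => β x.1)

theorem encodeBlocks_eq_true_iff {blk : X → ι} {β : X → Bool} {j : ι}
    {α : {x : X // blk x = j} → Bool} :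
    encodeBlocks blk β j α = true ↔ α = fun x => β x.1 :=
  decide_eq_true_iff

end Encoding

section Selections

variable {X : Type} {k : ℕ} [Fintype X]

theorem blockUnique_encodeBlocks (blk : X → Fin k) (β : X → Bool) :
    blockUnique blk (encodeBlocks blk β) := fun _ _ _ hα hα' =>
  (encodeBlocks_eq_true_iff.mp hα).trans (encodeBlocks_eq_true_iff.mp hα').symm

variable [DecidableEq X]

theorem gweight_eq_sum_card (blk : X → Fin k)
    (γ : (j : Fin k) → ({x : X // blk x = j} → Bool) → Bool) :
    gweight blk γ = ∑ j, (Finset.univ.filter fun α => γ j α = true).card := by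
  simp only [gweight, Finset.card_filter, Fintype.sum_sigma]

theorem gweight_encodeBlocks (blk : X → Fin k) (β : X → Bool) :
    gweight blk (encodeBlocks blk β) = k := by
  have filter_eq_singleton (j : Fin k) :
      (Finset.univ.filter fun α => encodeBlocks blk β j α = true) = {fun x => β x.1} := by
    ext α
    simp [encodeBlocks_eq_true_iff]
  simp [gweight_eq_sum_card, filter_eq_singleton]

theorem decodeBlocks_encodeBlocks (blk : X → Fin k) (β : X → Bool) :
    decodeBlocks blk (encodeBlocks blk β) = β := by
  funext x
  simp [decodeBlocks, encodeBlocks_eq_true_iff]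

theorem exists_iff_exists_decodeBlocks (blk : X → Fin k) (P : (X → Bool) → Prop) :
    (∃ β, P β) ↔
      ∃ γ, blockUnique blk γ ∧ gweight blk γ = k ∧ P (decodeBlocks blk γ) := by
  constructor
  · rintro ⟨β, hβ⟩
    exact ⟨encodeBlocks blk β, blockUnique_encodeBlocks blk β, gweight_encodeBlocks blk β,
      by rwa [decodeBlocks_encodeBlocks]⟩
  · rintro ⟨γ, -, -, hγ⟩
    exact ⟨decodeBlocks blk γ, hγ⟩

theorem forall_iff_forall_decodeBlocks (blk : X → Fin k) (P : (X → Bool) → Prop) :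
    (∀ β, P β) ↔
      ∀ γ, blockUnique blk γ → gweight blk γ = k → P (decodeBlocks blk γ) := by
  constructor
  · intro h γ _ _
    exact h (decodeBlocks blk γ)
  · intro h β
    rw [← decodeBlocks_encodeBlocks blk β]
    exact h _ (blockUnique_encodeBlocks blk β) (gweight_encodeBlocks blk β)

end Selections

/-- Block-encoding equivalence used in the subexponential-time reduction from QSat₂:
partitioning each of `X₁`, `X₂` into `k` blocks (given by `blk₁`, `blk₂`) and replacing
each block by indicator variables for its local assignments, the ∃∀-statement for an
arbitrary predicate `f` holds iff the corresponding ∃∀-statement over weight-`k`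
block-unique selections holds. -/
theorem statement8 {X₁ X₂ : Type} [Fintype X₁] [Fintype X₂]
    [DecidableEq X₁] [DecidableEq X₂] (k : ℕ)
    (blk₁ : X₁ → Fin k) (blk₂ : X₂ → Fin k)
    (f : (X₁ → Bool) → (X₂ → Bool) → Prop) :
    ((∃ β₁ : X₁ → Bool, ∀ β₂ : X₂ → Bool, f β₁ β₂) ↔
      (∃ γ₁ : (j : Fin k) → ({x : X₁ // blk₁ x = j} → Bool) → Bool,
        blockUnique blk₁ γ₁ ∧ gweight blk₁ γ₁ = k ∧
        ∀ γ₂ : (j : Fin k) → ({x : X₂ // blk₂ x = j} → Bool) → Bool,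
          blockUnique blk₂ γ₂ → gweight blk₂ γ₂ = k →
          f (decodeBlocks blk₁ γ₁) (decodeBlocks blk₂ γ₂))) := by
  simp only [exists_iff_exists_decodeBlocks blk₁, forall_iff_forall_decodeBlocks blk₂]
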